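/- arXiv:2205.05428 — 4 statements merged into one kernel-verified Lean document; each statement's English description precedes it below -/
import Mathlib

section
/- (Boundedness of augmented Lagrangian sublevel sets.) For any ρ > 0, any multiplier ξ with blocks ξ_{n,ℓ} ∈ ℝ^{N_ℓ}, and any c ∈ ℝ, the set {(w,b,v,u) ∈ Ω₃ : L_ρ(w,b,v,u;ξ) ≤ c} is bounded, where Ω₃ = {(w,b,v,u) : v_{n,ℓ} ≥ u_{n,ℓ} and v_{n,ℓ} ≥ α u_{n,ℓ} componentwise for all n, ℓ}. -/
/-!
Completing the square in the residual gives `ξ r + (ρ/2) r² ≥ (ρ/4) r² - ξ²/ρ`, so on the sublevel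
set the loss, `R₁`, `R₂`, the penalty (nonnegative on the cone) and `(ρ/4) ∑ r²` are nonnegative
quantities whose sum is at most `C = c + ∑ ξ²/ρ` (`energy_le`). Hence each of them is at most `C`.
`R₁` then bounds the weights, `R₂` together with the input convention bounds `v`, and the penalty
bounds `v - σ(u)` and so `σ(u)`; since the leaky ReLU has slope at least `α > 0`, it also bounds `u`.
Finally `b = u - W v - r`, evaluated at any one sample (`N ≥ 1`), is bounded.
-/


open Finset Filter Topology

noncomputable section

/-- Leaky ReLU activation with slope `α`. -/
def lrelu (α t : ℝ) : ℝ := max t (α * t)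

/-- Weight variables: `W ℓ` here is `W_{ℓ+1}` of the paper (layers `1,…,L`, `L = M+1`). -/
abbrev Wt (M : ℕ) (Nd : ℕ → ℕ) : Type :=
  (ℓ : Fin (M + 1)) → Fin (Nd (ℓ.1 + 1)) → Fin (Nd ℓ.1) → ℝ

/-- Bias variables. -/
abbrev Bs (M : ℕ) (Nd : ℕ → ℕ) : Type :=
  (ℓ : Fin (M + 1)) → Fin (Nd (ℓ.1 + 1)) → ℝ

/-- Auxiliary `v` variables (`v_{n,ℓ}`, `ℓ = 0,…,L`). -/
abbrev Vs (M N : ℕ) (Nd : ℕ → ℕ) : Type :=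
  Fin N → (ℓ : Fin (M + 2)) → Fin (Nd ℓ.1) → ℝ

/-- Auxiliary `u` variables (`u n ℓ` is `u_{n,ℓ+1}` of the paper). -/
abbrev Us (M N : ℕ) (Nd : ℕ → ℕ) : Type :=
  Fin N → (ℓ : Fin (M + 1)) → Fin (Nd (ℓ.1 + 1)) → ℝ

/-- A full point `(w, b, v, u)` of the variable space. -/
abbrev Pt (M N : ℕ) (Nd : ℕ → ℕ) : Type :=
  Wt M Nd × Bs M Nd × Vs M N Nd × Us M N Nd

variable {M N : ℕ} {Nd : ℕ → ℕ}

/-- Group sparse regularizer `R₁` (sum of Euclidean norms of the columns). -/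
def R1 (lw : ℝ) (W : Wt M Nd) : ℝ :=
  lw * ∑ ℓ : Fin (M + 1), ∑ j : Fin (Nd ℓ.1),
    Real.sqrt (∑ i : Fin (Nd (ℓ.1 + 1)), (W ℓ i j) ^ 2)

/-- Regularizer `R₂ = λ_v ‖v‖²`. -/
def R2 (lv : ℝ) (v : Vs M N Nd) : ℝ :=
  lv * ∑ n : Fin N, ∑ ℓ : Fin (M + 1), ∑ i : Fin (Nd (ℓ.1 + 1)), (v n ℓ.succ i) ^ 2

/-- Objective `Ō` of problem (P). -/
def Obar (lw lv : ℝ) (y : Fin N → Fin (Nd (M + 1)) → ℝ) (z : Pt M N Nd) : ℝ :=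
  (1 / (N : ℝ)) * ∑ n : Fin N, ∑ i : Fin (Nd (M + 1)),
      (z.2.2.1 n (Fin.last (M + 1)) i - y n i) ^ 2
    + R1 lw z.1 + R2 lv z.2.2.1

/-- Penalized objective `O` of problem (PP). -/
def Opp (α β lw lv : ℝ) (y : Fin N → Fin (Nd (M + 1)) → ℝ) (z : Pt M N Nd) : ℝ :=
  Obar lw lv y z
    + β * ∑ n : Fin N, ∑ ℓ : Fin (M + 1), ∑ i : Fin (Nd (ℓ.1 + 1)),
        (z.2.2.1 n ℓ.succ i - lrelu α (z.2.2.2 n ℓ i))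

/-- Input convention `v_{n,0} = x_n`. -/
def inputEq (x : Fin N → Fin (Nd 0) → ℝ) (z : Pt M N Nd) : Prop :=
  ∀ n : Fin N, z.2.2.1 n ⟨0, Nat.succ_pos _⟩ = x n

/-- Linear constraints `u_{n,ℓ} = W_ℓ v_{n,ℓ-1} + b_ℓ`. -/
def linEq (z : Pt M N Nd) : Prop :=
  ∀ (n : Fin N) (ℓ : Fin (M + 1)) (i : Fin (Nd (ℓ.1 + 1))),
    z.2.2.2 n ℓ i = (∑ j : Fin (Nd ℓ.1), z.1 ℓ i j * z.2.2.1 n ℓ.castSucc j) + z.2.1 ℓ i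

/-- Cone constraints `v ≥ u`, `v ≥ α u` (componentwise). -/
def inCone (α : ℝ) (z : Pt M N Nd) : Prop :=
  ∀ (n : Fin N) (ℓ : Fin (M + 1)) (i : Fin (Nd (ℓ.1 + 1))),
    z.2.2.2 n ℓ i ≤ z.2.2.1 n ℓ.succ i ∧ α * z.2.2.2 n ℓ i ≤ z.2.2.1 n ℓ.succ i

/-- Feasible set `Ω₂` of problem (PP). -/
def feas2 (α : ℝ) (x : Fin N → Fin (Nd 0) → ℝ) (z : Pt M N Nd) : Prop :=
  inputEq x z ∧ linEq z ∧ inCone α z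

/-- Feasible set `Ω₁` of problem (P). -/
def feas1 (α : ℝ) (x : Fin N → Fin (Nd 0) → ℝ) (z : Pt M N Nd) : Prop :=
  inputEq x z ∧ linEq z ∧
    ∀ (n : Fin N) (ℓ : Fin (M + 1)) (i : Fin (Nd (ℓ.1 + 1))),
      z.2.2.1 n ℓ.succ i = lrelu α (z.2.2.2 n ℓ i)

/-- Euclidean (ℓ²) distance on the variable space. -/
def l2dist (z z' : Pt M N Nd) : ℝ :=
  Real.sqrt
    ((∑ ℓ : Fin (M + 1), ∑ i : Fin (Nd (ℓ.1 + 1)), ∑ j : Fin (Nd ℓ.1),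
        (z.1 ℓ i j - z'.1 ℓ i j) ^ 2)
      + (∑ ℓ : Fin (M + 1), ∑ i : Fin (Nd (ℓ.1 + 1)), (z.2.1 ℓ i - z'.2.1 ℓ i) ^ 2)
      + (∑ n : Fin N, ∑ ℓ : Fin (M + 2), ∑ i : Fin (Nd ℓ.1),
          (z.2.2.1 n ℓ i - z'.2.2.1 n ℓ i) ^ 2)
      + (∑ n : Fin N, ∑ ℓ : Fin (M + 1), ∑ i : Fin (Nd (ℓ.1 + 1)),
          (z.2.2.2 n ℓ i - z'.2.2.2 n ℓ i) ^ 2))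

/-- `θ_w = (θ/λ_w)·√(N_{L+2} + N₀)`. -/
def thw (M : ℕ) (Nd : ℕ → ℕ) (θ lw : ℝ) : ℝ :=
  (θ / lw) * Real.sqrt ((∑ ℓ : Fin (M + 1), (Nd (ℓ.1 + 1) : ℝ)) + (Nd 0 : ℝ))

/-- `θ_v = √(θ/λ_v)`. -/
def thv (θ lv : ℝ) : ℝ := Real.sqrt (θ / lv)

/-- The level set `Ω_θ`. -/
def levelSet (α β lw lv θ : ℝ) (x : Fin N → Fin (Nd 0) → ℝ)
    (y : Fin N → Fin (Nd (M + 1)) → ℝ) : Set (Pt M N Nd) :=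
  {z | feas2 α x z ∧ Opp α β lw lv y z ≤ θ}

/-- Residual of the linear constraint. -/
def resid (z : Pt M N Nd) (n : Fin N) (ℓ : Fin (M + 1)) (i : Fin (Nd (ℓ.1 + 1))) : ℝ :=
  z.2.2.2 n ℓ i - ((∑ j : Fin (Nd ℓ.1), z.1 ℓ i j * z.2.2.1 n ℓ.castSucc j) + z.2.1 ℓ i)

/-- Augmented Lagrangian `L_ρ(w,b,v,u;ξ)`. -/
def ALag (α β lw lv : ℝ) (y : Fin N → Fin (Nd (M + 1)) → ℝ) (ρ : ℝ) (ξ : Us M N Nd)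
    (z : Pt M N Nd) : ℝ :=
  Opp α β lw lv y z
    + ∑ n : Fin N, ∑ ℓ : Fin (M + 1), ∑ i : Fin (Nd (ℓ.1 + 1)), ξ n ℓ i * resid z n ℓ i
    + (ρ / 2) * ∑ n : Fin N, ∑ ℓ : Fin (M + 1), ∑ i : Fin (Nd (ℓ.1 + 1)), (resid z n ℓ i) ^ 2

lemma term_le_sum₃ {a : ℕ} {f : Fin a → (ℓ : Fin (M + 1)) → Fin (Nd (ℓ.1 + 1)) → ℝ}
    (hf : ∀ n ℓ i, 0 ≤ f n ℓ i) (n : Fin a) (ℓ : Fin (M + 1)) (i : Fin (Nd (ℓ.1 + 1))) :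
    f n ℓ i ≤ ∑ n, ∑ ℓ, ∑ i, f n ℓ i :=
  calc f n ℓ i ≤ ∑ i, f n ℓ i :=
        single_le_sum (f := fun i => f n ℓ i) (fun i _ => hf n ℓ i) (mem_univ i)
    _ ≤ ∑ ℓ, ∑ i, f n ℓ i :=
        single_le_sum (f := fun ℓ => ∑ i, f n ℓ i)
          (fun ℓ _ => sum_nonneg fun i _ => hf n ℓ i) (mem_univ ℓ)
    _ ≤ ∑ n, ∑ ℓ, ∑ i, f n ℓ i :=
        single_le_sum (f := fun n => ∑ ℓ, ∑ i, f n ℓ i)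
          (fun n _ => sum_nonneg fun ℓ _ => sum_nonneg fun i _ => hf n ℓ i) (mem_univ n)

lemma sum₃_nonneg {a : ℕ} {f : Fin a → (ℓ : Fin (M + 1)) → Fin (Nd (ℓ.1 + 1)) → ℝ}
    (hf : ∀ n ℓ i, 0 ≤ f n ℓ i) : 0 ≤ ∑ n, ∑ ℓ, ∑ i, f n ℓ i :=
  sum_nonneg fun n _ => sum_nonneg fun ℓ _ => sum_nonneg fun i _ => hf n ℓ i

lemma R1_nonneg {lw : ℝ} (hlw : 0 < lw) (W : Wt M Nd) : 0 ≤ R1 lw W :=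
  mul_nonneg hlw.le (sum_nonneg fun _ _ => sum_nonneg fun _ _ => Real.sqrt_nonneg _)

/-- Every entry of the weights is at most the norm of its column, hence is controlled by `R₁`. -/
lemma abs_weight_le {lw : ℝ} (hlw : 0 < lw) (W : Wt M Nd) (ℓ : Fin (M + 1))
    (i : Fin (Nd (ℓ.1 + 1))) (j : Fin (Nd ℓ.1)) : |W ℓ i j| ≤ R1 lw W / lw := by
  have h1 : |W ℓ i j| ≤ Real.sqrt (∑ i, (W ℓ i j) ^ 2) :=
    Real.abs_le_sqrt (single_le_sum (f := fun i => (W ℓ i j) ^ 2)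
      (fun i _ => sq_nonneg _) (mem_univ i))
  have h2 : Real.sqrt (∑ i, (W ℓ i j) ^ 2) ≤ ∑ j, Real.sqrt (∑ i, (W ℓ i j) ^ 2) :=
    single_le_sum (f := fun j => Real.sqrt (∑ i, (W ℓ i j) ^ 2))
      (fun j _ => Real.sqrt_nonneg _) (mem_univ j)
  have h3 : ∑ j, Real.sqrt (∑ i, (W ℓ i j) ^ 2)
      ≤ ∑ ℓ : Fin (M + 1), ∑ j : Fin (Nd ℓ.1), Real.sqrt (∑ i, (W ℓ i j) ^ 2) :=
    single_le_sum (f := fun ℓ : Fin (M + 1) =>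
      ∑ j : Fin (Nd ℓ.1), Real.sqrt (∑ i, (W ℓ i j) ^ 2))
      (fun ℓ _ => sum_nonneg fun j _ => Real.sqrt_nonneg _) (mem_univ ℓ)
  rw [R1, mul_div_cancel_left₀ _ hlw.ne']
  exact h1.trans (h2.trans h3)

lemma penalty_nonneg {α : ℝ} {z : Pt M N Nd} (hz : inCone α z) (n : Fin N)
    (ℓ : Fin (M + 1)) (i : Fin (Nd (ℓ.1 + 1))) :
    0 ≤ z.2.2.1 n ℓ.succ i - lrelu α (z.2.2.2 n ℓ i) :=
  sub_nonneg.2 (max_le (hz n ℓ i).1 (hz n ℓ i).2)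

/-- The leaky ReLU is expanding up to the factor `α`, so bounds on `σ(t)` give bounds on `t`. -/
lemma abs_le_abs_lrelu_div {α : ℝ} (hα0 : 0 < α) (hα1 : α < 1) (t : ℝ) :
    |t| ≤ |lrelu α t| / α := by
  rw [le_div_iff₀ hα0, lrelu]
  rcases le_total 0 t with ht | ht
  · rw [max_eq_left (by nlinarith)]
    nlinarith [abs_nonneg t]
  · rw [max_eq_right (by nlinarith), abs_mul, abs_of_pos hα0, mul_comm]

lemma energy_le {α β lw lv : ℝ} {y : Fin N → Fin (Nd (M + 1)) → ℝ} {ρ : ℝ} (hρ : 0 < ρ)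
    {ξ : Us M N Nd} {c : ℝ} {z : Pt M N Nd} (hz : ALag α β lw lv y ρ ξ z ≤ c) :
    R1 lw z.1 + R2 lv z.2.2.1
      + β * ∑ n : Fin N, ∑ ℓ : Fin (M + 1), ∑ i : Fin (Nd (ℓ.1 + 1)),
        (z.2.2.1 n ℓ.succ i - lrelu α (z.2.2.2 n ℓ i))
      + (ρ / 4) * ∑ n : Fin N, ∑ ℓ : Fin (M + 1), ∑ i : Fin (Nd (ℓ.1 + 1)), (resid z n ℓ i) ^ 2
      ≤ c + ∑ n : Fin N, ∑ ℓ : Fin (M + 1), ∑ i : Fin (Nd (ℓ.1 + 1)), (ξ n ℓ i) ^ 2 / ρ := by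
  have hloss : 0 ≤ (1 / (N : ℝ)) * ∑ n : Fin N, ∑ i : Fin (Nd (M + 1)),
      (z.2.2.1 n (Fin.last (M + 1)) i - y n i) ^ 2 :=
    mul_nonneg (by positivity) (sum_nonneg fun _ _ => sum_nonneg fun _ _ => sq_nonneg _)
  have hsq : 0 ≤ ∑ n : Fin N, ∑ ℓ : Fin (M + 1), ∑ i : Fin (Nd (ℓ.1 + 1)),
      (ξ n ℓ i * resid z n ℓ i + (ρ / 4) * (resid z n ℓ i) ^ 2 + (ξ n ℓ i) ^ 2 / ρ) := by
    refine sum₃_nonneg fun n ℓ i => ?_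
    have : ξ n ℓ i * resid z n ℓ i + (ρ / 4) * (resid z n ℓ i) ^ 2 + (ξ n ℓ i) ^ 2 / ρ
        = (ρ * resid z n ℓ i / 2 + ξ n ℓ i) ^ 2 / ρ := by
      field_simp
      ring
    rw [this]
    positivity
  simp only [sum_add_distrib, ← mul_sum] at hsq
  rw [ALag, Opp, Obar] at hz
  linarith

/-- sublevel sets of the augmented Lagrangian over `Ω₃` are bounded. -/
theorem ALag_sublevel_bounded
    (M N : ℕ) (Nd : ℕ → ℕ) (hN : 1 ≤ N) (hNd : ∀ ℓ ≤ M + 1, 1 ≤ Nd ℓ)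
    (α β lw lv : ℝ) (hα0 : 0 < α) (hα1 : α < 1) (hβ : 0 < β)
    (hlw : 0 < lw) (hlv : 0 < lv)
    (x : Fin N → Fin (Nd 0) → ℝ) (y : Fin N → Fin (Nd (M + 1)) → ℝ)
    (ρ : ℝ) (hρ : 0 < ρ) (ξ : Us M N Nd) (c : ℝ) :
    Bornology.IsBounded
      {z : Pt M N Nd | inputEq x z ∧ inCone α z ∧ ALag α β lw lv y ρ ξ z ≤ c} := by
  set C : ℝ := c + ∑ n : Fin N, ∑ ℓ : Fin (M + 1), ∑ i : Fin (Nd (ℓ.1 + 1)), (ξ n ℓ i) ^ 2 / ρ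
    with hC
  set Kw : ℝ := C / lw with hKw
  set Kv : ℝ := ‖x‖ + Real.sqrt (C / lv) with hKv
  set Ku : ℝ := (Kv + C / β) / α with hKu
  set D : ℝ := ∑ ℓ : Fin (M + 1), (Nd ℓ.1 : ℝ) with hD
  set Kb : ℝ := Ku + D * (Kw * Kv) + Real.sqrt (C / (ρ / 4)) with hKb
  rw [isBounded_iff_forall_norm_le]
  refine ⟨max Kw (max Kb (max Kv Ku)), ?_⟩
  rintro z ⟨hin, hcone, hz⟩
  have hE := energy_le hρ hz
  rw [← hC] at hE
  have hpen := penalty_nonneg hcone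
  have h1 := R1_nonneg hlw z.1
  have hv2 : ∀ n (ℓ : Fin (M + 1)) (i : Fin (Nd (ℓ.1 + 1))), 0 ≤ (z.2.2.1 n ℓ.succ i) ^ 2 :=
    fun n ℓ i => sq_nonneg _
  have h2 : 0 ≤ R2 lv z.2.2.1 := mul_nonneg hlv.le (sum₃_nonneg hv2)
  have h3 := mul_nonneg hβ.le (sum₃_nonneg hpen)
  have hr2 : ∀ n (ℓ : Fin (M + 1)) (i : Fin (Nd (ℓ.1 + 1))), 0 ≤ (resid z n ℓ i) ^ 2 :=
    fun n ℓ i => sq_nonneg _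
  have h4 := mul_nonneg (by positivity : 0 ≤ ρ / 4) (sum₃_nonneg hr2)
  have hC0 : 0 ≤ C := by linarith
  have hKw0 : 0 ≤ Kw := by positivity
  have hKv0 : 0 ≤ Kv := by positivity
  have hKu0 : 0 ≤ Ku := by positivity
  have hD0 : 0 ≤ D := by positivity
  have hKb0 : 0 ≤ Kb := by positivity
  have hw : ∀ ℓ i j, |z.1 ℓ i j| ≤ Kw := fun ℓ i j =>
    (abs_weight_le hlw z.1 ℓ i j).trans (div_le_div_of_nonneg_right (by linarith) hlw.le)
  have hvs : ∀ n (ℓ : Fin (M + 1)) (i : Fin (Nd (ℓ.1 + 1))), |z.2.2.1 n ℓ.succ i| ≤ Kv := by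
    intro n ℓ i
    have h : |z.2.2.1 n ℓ.succ i| ≤ Real.sqrt (C / lv) := by
      apply Real.abs_le_sqrt
      rw [le_div_iff₀ hlv, mul_comm]
      refine (mul_le_mul_of_nonneg_left (term_le_sum₃ hv2 n ℓ i) hlv.le).trans ?_
      change R2 lv z.2.2.1 ≤ C
      linarith
    linarith [norm_nonneg x]
  have hv : ∀ n (ℓ : Fin (M + 2)) (i : Fin (Nd ℓ.1)), |z.2.2.1 n ℓ i| ≤ Kv := by
    intro n ℓ
    refine Fin.cases ?_ (fun ℓ => hvs n ℓ) ℓ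
    intro i
    have h : z.2.2.1 n 0 i = x n i := congrFun (hin n) i
    rw [h]
    have h' : |x n i| ≤ ‖x‖ := (norm_le_pi_norm (x n) i).trans (norm_le_pi_norm x n)
    linarith [Real.sqrt_nonneg (C / lv)]
  have hu : ∀ n ℓ i, |z.2.2.2 n ℓ i| ≤ Ku := by
    intro n ℓ i
    refine (abs_le_abs_lrelu_div hα0 hα1 _).trans (div_le_div_of_nonneg_right ?_ hα0.le)
    have hp : z.2.2.1 n ℓ.succ i - lrelu α (z.2.2.2 n ℓ i) ≤ C / β := by
      rw [le_div_iff₀ hβ, mul_comm]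
      exact (mul_le_mul_of_nonneg_left (term_le_sum₃ hpen n ℓ i) hβ.le).trans (by linarith)
    have hp0 := hpen n ℓ i
    have := abs_le.1 (hvs n ℓ i)
    rw [abs_le]
    constructor <;> linarith
  have hr : ∀ n ℓ i, |resid z n ℓ i| ≤ Real.sqrt (C / (ρ / 4)) := by
    intro n ℓ i
    have hρ4 : 0 < ρ / 4 := by positivity
    apply Real.abs_le_sqrt
    rw [le_div_iff₀ hρ4, mul_comm]
    exact (mul_le_mul_of_nonneg_left (term_le_sum₃ hr2 n ℓ i) hρ4.le).trans (by linarith)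
  have hb : ∀ ℓ i, |z.2.1 ℓ i| ≤ Kb := by
    intro ℓ i
    let n : Fin N := ⟨0, hN⟩
    have hs : |∑ j : Fin (Nd ℓ.1), z.1 ℓ i j * z.2.2.1 n ℓ.castSucc j| ≤ D * (Kw * Kv) := by
      calc |∑ j : Fin (Nd ℓ.1), z.1 ℓ i j * z.2.2.1 n ℓ.castSucc j|
          ≤ ∑ j : Fin (Nd ℓ.1), |z.1 ℓ i j * z.2.2.1 n ℓ.castSucc j| := abs_sum_le_sum_abs _ _
        _ ≤ ∑ _j : Fin (Nd ℓ.1), Kw * Kv := by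
            refine sum_le_sum fun j _ => ?_
            rw [abs_mul]
            exact mul_le_mul (hw ℓ i j) (hv n ℓ.castSucc j) (abs_nonneg _) hKw0
        _ = (Nd ℓ.1 : ℝ) * (Kw * Kv) := by simp
        _ ≤ D * (Kw * Kv) := by
            refine mul_le_mul_of_nonneg_right ?_ (by positivity)
            exact single_le_sum (f := fun ℓ : Fin (M + 1) => (Nd ℓ.1 : ℝ))
              (fun _ _ => Nat.cast_nonneg _) (mem_univ ℓ)
    have he : z.2.1 ℓ i = z.2.2.2 n ℓ i
        - (∑ j : Fin (Nd ℓ.1), z.1 ℓ i j * z.2.2.1 n ℓ.castSucc j) - resid z n ℓ i := by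
      rw [resid]
      ring
    rw [he]
    have a1 := abs_le.1 hs
    have a2 := abs_le.1 (hu n ℓ i)
    have a3 := abs_le.1 (hr n ℓ i)
    rw [abs_le]
    constructor <;> linarith
  have nw : ‖z.1‖ ≤ Kw := (pi_norm_le_iff_of_nonneg hKw0).2 fun ℓ =>
    (pi_norm_le_iff_of_nonneg hKw0).2 fun i => (pi_norm_le_iff_of_nonneg hKw0).2 fun j => hw ℓ i j
  have nb : ‖z.2.1‖ ≤ Kb := (pi_norm_le_iff_of_nonneg hKb0).2 fun ℓ =>
    (pi_norm_le_iff_of_nonneg hKb0).2 fun i => hb ℓ i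
  have nv : ‖z.2.2.1‖ ≤ Kv := (pi_norm_le_iff_of_nonneg hKv0).2 fun n =>
    (pi_norm_le_iff_of_nonneg hKv0).2 fun ℓ => (pi_norm_le_iff_of_nonneg hKv0).2 fun i => hv n ℓ i
  have nu : ‖z.2.2.2‖ ≤ Ku := (pi_norm_le_iff_of_nonneg hKu0).2 fun n =>
    (pi_norm_le_iff_of_nonneg hKu0).2 fun ℓ => (pi_norm_le_iff_of_nonneg hKu0).2 fun i => hu n ℓ i
  rw [Prod.norm_def, Prod.norm_def, Prod.norm_def]
  exact max_le_max nw (max_le_max nb (max_le_max nv nu))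
end
end

section
/- (Multiplier norm bound under windowed decay.) Let (a_k)_{k≥0} and (s_k)_{k≥0} be sequences of nonnegative real numbers, let γ ≥ 1 be an integer, 0 < η < 1, ρ > 0, and k₀ ≥ γ. Suppose a_k ≤ η · max{a_t : k−γ ≤ t ≤ k−1} for all k > k₀, and s_k ≤ s_{k−1} + ρ · a_k for all k > k₀. Then for all k > k₀, s_k ≤ s_{k₀} + (γ η ρ / (1 − η)) · max{a_t : k₀−γ+1 ≤ t ≤ k₀}; in particular the sequence (s_k) is bounded. -/
/-!
Let `M` be the maximum of `a` over the `γ` indices ending at `k0`. Each block of `γ` consecutive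
indices after `k0` gains a factor `η`, so `a (k0 + 1 + n) ≤ M * η ^ (n / γ + 1)` with the floor
quotient `n / γ` (`window_decay`, by strong induction). Telescoping the recursion for `s` leaves
`ρ * M * η * ∑ η ^ (i / γ)`, and that sum is a geometric series with every term repeated `γ` times,
hence at most `γ / (1 - η)` (`sum_pow_div_le`).
-/

open Finset Filter Topology

/-- The geometric series with each term repeated `γ` times, cut off after `m` full blocks. -/
lemma sum_pow_div_blocks (γ : ℕ) (η : ℝ) (m : ℕ) :
    (∑ i ∈ Finset.range (m * γ), η ^ (i / γ)) * (1 - η) = γ * (1 - η ^ m) := by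
  induction m with
  | zero => simp
  | succ m ih =>
    have hblock : ∑ j ∈ Finset.range γ, η ^ ((m * γ + j) / γ) = γ * η ^ m := by
      rw [Finset.sum_congr rfl (g := fun _ => η ^ m), Finset.sum_const, Finset.card_range,
        nsmul_eq_mul]
      intro j hj
      have hj' := Finset.mem_range.mp hj
      rw [mul_comm m γ, Nat.mul_add_div (by omega), Nat.div_eq_of_lt hj', add_zero]
    rw [Nat.succ_mul, Finset.sum_range_add, hblock, add_mul, ih]
    ring

lemma sum_pow_div_le (γ : ℕ) (hγ : 1 ≤ γ) (η : ℝ) (hη0 : 0 < η) (hη1 : η < 1) (n : ℕ) :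
    ∑ i ∈ Finset.range n, η ^ (i / γ) ≤ γ / (1 - η) := by
  have hsub : ∑ i ∈ Finset.range n, η ^ (i / γ) ≤
      ∑ i ∈ Finset.range (n * γ), η ^ (i / γ) :=
    Finset.sum_le_sum_of_subset_of_nonneg
      (Finset.range_mono (Nat.le_mul_of_pos_right n hγ)) (fun i _ _ => by positivity)
  refine hsub.trans ?_
  rw [le_div_iff₀ (by linarith), sum_pow_div_blocks]
  have : 0 ≤ (γ : ℝ) * η ^ n := by positivity
  linarith

/-- Windowed contraction by `η` gives geometric decay along blocks of length `γ`, starting from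
any nonnegative bound `M` for the window ending at `k0`. The contraction is phrased through upper
bounds `B` of the window instead of its maximum. -/
lemma window_decay (a : ℕ → ℝ) (γ : ℕ) (hγ : 1 ≤ γ) (η M : ℝ) (hη0 : 0 < η) (hη1 : η < 1)
    (hM0 : 0 ≤ M) (k0 : ℕ) (hk0 : γ ≤ k0)
    (hM : ∀ t ∈ Finset.Icc (k0 - γ + 1) k0, a t ≤ M)
    (hdec : ∀ k > k0, ∀ B : ℝ, (∀ t ∈ Finset.Icc (k - γ) (k - 1), a t ≤ B) → a k ≤ η * B)
    (n : ℕ) :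
    a (k0 + 1 + n) ≤ M * η ^ (n / γ + 1) := by
  induction n using Nat.strong_induction_on with
  | _ n ih =>
    rw [pow_succ, ← mul_assoc, mul_comm _ η]
    refine hdec (k0 + 1 + n) (by omega) _ fun t ht => ?_
    rw [Finset.mem_Icc] at ht
    by_cases htk : t ≤ k0
    · -- A window reaching back to `k0` belongs to the first block, where the exponent is zero.
      rw [Nat.div_eq_of_lt (by omega : n < γ), pow_zero, mul_one]
      exact hM t (Finset.mem_Icc.mpr (by omega))
    · obtain ⟨m, rfl⟩ : ∃ m, t = k0 + 1 + m := ⟨t - (k0 + 1), by omega⟩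
      refine (ih m (by omega)).trans (mul_le_mul_of_nonneg_left ?_ hM0)
      refine pow_le_pow_of_le_one hη0.le hη1.le ?_
      rw [← Nat.add_div_right m hγ]
      exact Nat.div_le_div_right (by omega)

/-- multiplier norm bound under windowed decay. -/
theorem multiplier_bound_windowed_decay
    (a s : ℕ → ℝ) (ha : ∀ k, 0 ≤ a k) (hs : ∀ k, 0 ≤ s k)
    (γ : ℕ) (hγ : 1 ≤ γ) (η ρ : ℝ) (hη0 : 0 < η) (hη1 : η < 1) (hρ : 0 < ρ)
    (k0 : ℕ) (hk0 : γ ≤ k0)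
    (hdec : ∀ k > k0, a k ≤
      η * (Finset.Icc (k - γ) (k - 1)).sup' (Finset.nonempty_Icc.mpr (by omega)) a)
    (hrec : ∀ k > k0, s k ≤ s (k - 1) + ρ * a k) :
    (∀ k > k0, s k ≤ s k0 + (γ * η * ρ / (1 - η)) *
      (Finset.Icc (k0 - γ + 1) k0).sup' (Finset.nonempty_Icc.mpr (by omega)) a) ∧
    ∃ C : ℝ, ∀ k, s k ≤ C := by
  have hM : ∀ t ∈ Finset.Icc (k0 - γ + 1) k0, a t ≤
      (Finset.Icc (k0 - γ + 1) k0).sup' (Finset.nonempty_Icc.mpr (by omega)) a :=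
    fun t ht => Finset.le_sup' a ht
  generalize (Finset.Icc (k0 - γ + 1) k0).sup' (Finset.nonempty_Icc.mpr (by omega)) a = M at hM ⊢
  have hM0 : 0 ≤ M := (ha k0).trans (hM k0 (Finset.mem_Icc.mpr (by omega)))
  have hdec' : ∀ k > k0, ∀ B : ℝ, (∀ t ∈ Finset.Icc (k - γ) (k - 1), a t ≤ B) → a k ≤ η * B :=
    fun k hk B hB => (hdec k hk).trans
      (mul_le_mul_of_nonneg_left (Finset.sup'_le _ _ hB) hη0.le)
  have htel : ∀ n, s (k0 + n) ≤
      s k0 + ρ * M * η * ∑ i ∈ Finset.range n, η ^ (i / γ) := by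
    intro n
    induction n with
    | zero => simp
    | succ n ih =>
      have h1 := hrec (k0 + 1 + n) (by omega)
      rw [show k0 + 1 + n - 1 = k0 + n by omega] at h1
      have h2 := mul_le_mul_of_nonneg_left
        (window_decay a γ hγ η M hη0 hη1 hM0 k0 hk0 hM hdec' n) hρ.le
      rw [show k0 + (n + 1) = k0 + 1 + n by omega, Finset.sum_range_succ]
      rw [pow_succ] at h2
      linarith
  have hbound : ∀ k > k0, s k ≤ s k0 + (γ * η * ρ / (1 - η)) * M := by
    intro k hk
    obtain ⟨n, rfl⟩ := Nat.exists_eq_add_of_lt hk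
    have h := mul_le_mul_of_nonneg_left (sum_pow_div_le γ hγ η hη0 hη1 (n + 1))
      (by positivity : 0 ≤ ρ * M * η)
    have e : ρ * M * η * (γ / (1 - η)) = γ * η * ρ / (1 - η) * M := by ring
    have := htel (n + 1)
    rw [← add_assoc] at this
    linarith
  refine ⟨hbound, ∑ i ∈ Finset.range (k0 + 1), s i + γ * η * ρ / (1 - η) * M, fun k => ?_⟩
  have hle : ∀ i ≤ k0, s i ≤ ∑ i ∈ Finset.range (k0 + 1), s i := fun i hi =>
    Finset.single_le_sum (fun j _ => hs j) (Finset.mem_range.mpr (by omega))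
  have hpos : 0 ≤ γ * η * ρ / (1 - η) * M :=
    mul_nonneg (div_nonneg (by positivity) (by linarith)) hM0
  rcases le_or_gt k k0 with hk | hk
  · linarith [hle k hk]
  · linarith [hbound k hk, hle k0 le_rfl]
end

section
/- (Feasibility driven to zero by the inexact augmented Lagrangian scheme.) Fix parameters η₁ ∈ (0,1), η₂ ∈ (0,1), η₃ > 1, an integer γ ≥ 1, ρ⁽⁰⁾ > 0, and an initial multiplier ξ⁽⁰⁾. Suppose sequences (w⁽ᵏ⁾,b⁽ᵏ⁾,v⁽ᵏ⁾,u⁽ᵏ⁾) ∈ Ω₃, ξ⁽ᵏ⁾ and ρ⁽ᵏ⁾ (k ≥ 1) satisfy, with the residual r⁽ᵏ⁾ defined blockwise by r⁽ᵏ⁾_{n,ℓ} = u⁽ᵏ⁾_{n,ℓ} − W⁽ᵏ⁾_ℓ v⁽ᵏ⁾_{n,ℓ−1} − b⁽ᵏ⁾_ℓ: (i) L_{ρ⁽ᵏ⁻¹⁾}(w⁽ᵏ⁾,b⁽ᵏ⁾,v⁽ᵏ⁾,u⁽ᵏ⁾; ξ⁽ᵏ⁻¹⁾) < θ for all k; (ii)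 ξ⁽ᵏ⁾ = ξ⁽ᵏ⁻¹⁾ + ρ⁽ᵏ⁻¹⁾ r⁽ᵏ⁾; (iii) ρ⁽ᵏ⁾ = ρ⁽ᵏ⁻¹⁾ if k ≤ γ or ‖r⁽ᵏ⁾‖ ≤ η₁ · max{‖r⁽ᵗ⁾‖ : k−γ ≤ t ≤ k−1}, and otherwise ρ⁽ᵏ⁾ = max{ρ⁽ᵏ⁻¹⁾/η₂, ‖ξ⁽ᵏ⁾‖^{1+η₃}}. Then liminf_{k→∞} ‖r⁽ᵏ⁾‖ = 0, and the sequence (w⁽ᵏ⁾,b⁽ᵏ⁾,v⁽ᵏ⁾,u⁽ᵏ⁾) has at least one accumulation point. -/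
/-!
Completing the square turns the multiplier update into the identity
`L_ρ(z_k; ξ_{k-1}) = O(z_k) + (‖ξ_k‖² - ‖ξ_{k-1}‖²) / (2 ρ_{k-1})` (`ALag_eq`), so the level
condition `L < θ` bounds both `O(z_k)` and `‖ξ_k‖²` by `ρ_{k-1}` and `‖ξ_{k-1}‖²`
(on the cone every term of `O` is nonnegative).  There are two cases.

* The penalty is increased only finitely often.  From some point on each residual is at most `η₁`
  times one of its `γ` predecessors, hence decays geometrically (`window_decay`).  The multiplier
  increments `ρ r_k` are then summable, the multipliers converge, and `O(z_k)` is bounded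
  (`exists_subseq_of_eventually`).
* The penalty is increased infinitely often.  Then `ρ_k → ∞`, and after each increase
  `‖ξ_k‖² ≤ 1 + ρ_k` because `ρ_k ≥ ‖ξ_k‖^{1+η₃}` with `1 + η₃ ≥ 2`.  At the following step
  `O(z_{k+1})` is bounded, and `ρ_k² ‖r_{k+1}‖² ≤ 2‖ξ_{k+1}‖² + 2‖ξ_k‖² = O(ρ_k)` forces
  `r_{k+1} → 0` along that subsequence (`exists_subseq_of_frequently`).

Either way there is a subsequence with vanishing residual and bounded objective.  Points of the
cone with bounded objective and bounded residual lie in a compact box (`exists_compact_box`): the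
regularizers bound `W` and `v`, the penalty term bounds `u` from below (using `α > 0`), and `b` is
recovered from the residual of any one sample.  Compactness gives the accumulation point.
-/

open Finset Filter Topology

noncomputable section

variable {M N : ℕ} {Nd : ℕ → ℕ}

/-- Euclidean norm of the feasibility residual `u - Ψ(v)w - Ab` at a point. -/
def residNorm (z : Pt M N Nd) : ℝ :=
  Real.sqrt (∑ n : Fin N, ∑ ℓ : Fin (M + 1), ∑ i : Fin (Nd (ℓ.1 + 1)),
    (resid z n ℓ i) ^ 2)

/-- Euclidean norm of a multiplier. -/
def multNorm (ξ : Us M N Nd) : ℝ :=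
  Real.sqrt (∑ n : Fin N, ∑ ℓ : Fin (M + 1), ∑ i : Fin (Nd (ℓ.1 + 1)),
    (ξ n ℓ i) ^ 2)

/-! ### Norms and the augmented Lagrangian identity -/

/-- Squared Euclidean norm of a multiplier or residual block. -/
def sumSq (ξ : Us M N Nd) : ℝ :=
  ∑ n : Fin N, ∑ ℓ : Fin (M + 1), ∑ i : Fin (Nd (ℓ.1 + 1)), (ξ n ℓ i) ^ 2

lemma sumSq_nonneg (ξ : Us M N Nd) : 0 ≤ sumSq ξ := by
  unfold sumSq; positivity

lemma multNorm_sq (ξ : Us M N Nd) : multNorm ξ ^ 2 = sumSq ξ :=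
  Real.sq_sqrt (sumSq_nonneg ξ)

lemma residNorm_sq (z : Pt M N Nd) : residNorm z ^ 2 = sumSq (resid z) :=
  Real.sq_sqrt (sumSq_nonneg (resid z))

lemma residNorm_nonneg (z : Pt M N Nd) : 0 ≤ residNorm z := Real.sqrt_nonneg _

/-- A term of a triple sum of nonnegative terms is at most the sum. -/
lemma single_le_triple_sum (f : Us M N Nd) (hf : ∀ n ℓ i, 0 ≤ f n ℓ i) (n : Fin N)
    (ℓ : Fin (M + 1)) (i : Fin (Nd (ℓ.1 + 1))) :
    f n ℓ i ≤ ∑ n : Fin N, ∑ ℓ : Fin (M + 1), ∑ i : Fin (Nd (ℓ.1 + 1)), f n ℓ i :=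
  calc f n ℓ i ≤ ∑ i, f n ℓ i :=
        Finset.single_le_sum (f := fun i => f n ℓ i) (fun i _ => hf n ℓ i) (mem_univ i)
    _ ≤ ∑ ℓ : Fin (M + 1), ∑ i : Fin (Nd (ℓ.1 + 1)), f n ℓ i :=
        Finset.single_le_sum (f := fun ℓ : Fin (M + 1) => ∑ i, f n ℓ i)
          (fun ℓ _ => Finset.sum_nonneg fun i _ => hf n ℓ i) (mem_univ ℓ)
    _ ≤ _ := Finset.single_le_sum
          (f := fun n => ∑ ℓ : Fin (M + 1), ∑ i : Fin (Nd (ℓ.1 + 1)), f n ℓ i)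
          (fun n _ => Finset.sum_nonneg fun ℓ _ => Finset.sum_nonneg fun i _ => hf n ℓ i)
          (mem_univ n)

lemma abs_resid_le (z : Pt M N Nd) (n : Fin N) (ℓ : Fin (M + 1)) (i : Fin (Nd (ℓ.1 + 1))) :
    |resid z n ℓ i| ≤ residNorm z := by
  apply Real.abs_le_sqrt
  exact single_le_triple_sum (fun n ℓ i => (resid z n ℓ i) ^ 2) (fun _ _ _ => sq_nonneg _) n ℓ i

/-- Completing the square: along a multiplier update the Lagrangian terms are the normalized
increment of `‖ξ‖²`. -/
lemma ALag_eq (α β lw lv : ℝ) (y : Fin N → Fin (Nd (M + 1)) → ℝ) {ρ : ℝ} (hρ : 0 < ρ)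
    (ξ ξ' : Us M N Nd) (z : Pt M N Nd)
    (h : ∀ n ℓ i, ξ' n ℓ i = ξ n ℓ i + ρ * resid z n ℓ i) :
    ALag α β lw lv y ρ ξ z = Opp α β lw lv y z + (sumSq ξ' - sumSq ξ) / (2 * ρ) := by
  unfold ALag sumSq
  rw [add_assoc]
  congr 1
  simp only [Finset.mul_sum, ← Finset.sum_sub_distrib, Finset.sum_div, ← Finset.sum_add_distrib]
  refine Finset.sum_congr rfl fun n _ => Finset.sum_congr rfl fun ℓ _ =>
    Finset.sum_congr rfl fun i _ => ?_
  rw [h]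
  field_simp
  ring

/-- The residual is the scaled multiplier increment, hence controlled by both multipliers. -/
lemma resid_le_of_update {ρ : ℝ} (ξ ξ' : Us M N Nd) (z : Pt M N Nd)
    (h : ∀ n ℓ i, ξ' n ℓ i = ξ n ℓ i + ρ * resid z n ℓ i) :
    ρ ^ 2 * residNorm z ^ 2 ≤ 2 * sumSq ξ' + 2 * sumSq ξ := by
  rw [residNorm_sq]
  unfold sumSq
  simp only [Finset.mul_sum, ← Finset.sum_add_distrib]
  refine Finset.sum_le_sum fun n _ => Finset.sum_le_sum fun ℓ _ =>
    Finset.sum_le_sum fun i _ => ?_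
  rw [h]
  nlinarith [sq_nonneg (2 * ξ n ℓ i + ρ * resid z n ℓ i)]

/-! ### Compactness of bounded-objective, bounded-residual cone points -/

lemma lrelu_le_of_inCone {α : ℝ} {z : Pt M N Nd} (h : inCone α z) (n : Fin N)
    (ℓ : Fin (M + 1)) (i : Fin (Nd (ℓ.1 + 1))) :
    0 ≤ z.2.2.1 n ℓ.succ i - lrelu α (z.2.2.2 n ℓ i) :=
  sub_nonneg.mpr (max_le (h n ℓ i).1 (h n ℓ i).2)

/-- On the cone all terms of the penalized objective are nonnegative, so each of them is bounded by
the objective. -/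
lemma Opp_terms {α β lw lv : ℝ} (hβ : 0 < β) (hlw : 0 < lw) (hlv : 0 < lv)
    (y : Fin N → Fin (Nd (M + 1)) → ℝ) {z : Pt M N Nd} (h : inCone α z) :
    0 ≤ Opp α β lw lv y z ∧ R1 lw z.1 ≤ Opp α β lw lv y z ∧ R2 lv z.2.2.1 ≤ Opp α β lw lv y z ∧
    β * ∑ n : Fin N, ∑ ℓ : Fin (M + 1), ∑ i : Fin (Nd (ℓ.1 + 1)),
        (z.2.2.1 n ℓ.succ i - lrelu α (z.2.2.2 n ℓ i)) ≤ Opp α β lw lv y z := by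
  have h1 : 0 ≤ (1 / (N : ℝ)) * ∑ n : Fin N, ∑ i : Fin (Nd (M + 1)),
      (z.2.2.1 n (Fin.last (M + 1)) i - y n i) ^ 2 := by positivity
  have h2 : 0 ≤ R1 lw z.1 := by unfold R1; positivity
  have h3 : 0 ≤ R2 lv z.2.2.1 := by unfold R2; positivity
  have h4 : 0 ≤ β * ∑ n : Fin N, ∑ ℓ : Fin (M + 1), ∑ i : Fin (Nd (ℓ.1 + 1)),
        (z.2.2.1 n ℓ.succ i - lrelu α (z.2.2.2 n ℓ i)) :=
    mul_nonneg hβ.le (Finset.sum_nonneg fun n _ => Finset.sum_nonneg fun ℓ _ =>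
      Finset.sum_nonneg fun i _ => lrelu_le_of_inCone h n ℓ i)
  unfold Opp Obar
  refine ⟨?_, ?_, ?_, ?_⟩ <;> linarith

lemma abs_W_le {lw C : ℝ} (hlw : 0 < lw) {W : Wt M Nd} (h : R1 lw W ≤ C) (ℓ : Fin (M + 1))
    (i : Fin (Nd (ℓ.1 + 1))) (j : Fin (Nd ℓ.1)) : |W ℓ i j| ≤ C / lw := by
  rw [le_div_iff₀' hlw]
  refine le_trans ?_ h
  unfold R1
  gcongr
  calc |W ℓ i j| ≤ Real.sqrt (∑ i, (W ℓ i j) ^ 2) := by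
        apply Real.abs_le_sqrt
        exact Finset.single_le_sum (f := fun i => (W ℓ i j) ^ 2) (fun _ _ => sq_nonneg _)
          (mem_univ i)
    _ ≤ ∑ j, Real.sqrt (∑ i, (W ℓ i j) ^ 2) :=
        Finset.single_le_sum (f := fun j => Real.sqrt (∑ i, (W ℓ i j) ^ 2))
          (fun _ _ => Real.sqrt_nonneg _) (mem_univ j)
    _ ≤ _ := Finset.single_le_sum
          (f := fun ℓ : Fin (M + 1) => ∑ j : Fin (Nd ℓ.1),
            Real.sqrt (∑ i : Fin (Nd (ℓ.1 + 1)), (W ℓ i j) ^ 2))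
          (fun _ _ => Finset.sum_nonneg fun _ _ => Real.sqrt_nonneg _) (mem_univ ℓ)

lemma abs_v_le {lv C : ℝ} (hlv : 0 < lv) {v : Vs M N Nd} (h : R2 lv v ≤ C) (n : Fin N)
    (ℓ : Fin (M + 1)) (i : Fin (Nd (ℓ.1 + 1))) : |v n ℓ.succ i| ≤ Real.sqrt (C / lv) := by
  apply Real.abs_le_sqrt
  rw [le_div_iff₀' hlv]
  refine le_trans ?_ h
  unfold R2
  gcongr
  exact single_le_triple_sum (fun n ℓ i => (v n ℓ.succ i) ^ 2) (fun _ _ _ => sq_nonneg _) n ℓ i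

/-- Cone points with bounded objective and bounded residual lie in a fixed compact box. -/
lemma exists_compact_box (hN : 1 ≤ N) {α β lw lv : ℝ} (hα0 : 0 < α) (hα1 : α < 1) (hβ : 0 < β)
    (hlw : 0 < lw) (hlv : 0 < lv) (x : Fin N → Fin (Nd 0) → ℝ)
    (y : Fin N → Fin (Nd (M + 1)) → ℝ) (C R : ℝ) :
    ∃ K : Set (Pt M N Nd), IsCompact K ∧ ∀ z : Pt M N Nd, inputEq x z → inCone α z →
      Opp α β lw lv y z ≤ C → residNorm z ≤ R → z ∈ K := by
  set Bw := C / lw with hBw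
  set Bv := ‖x‖ + Real.sqrt (C / lv) with hBv
  set D := Bv + C / β with hD
  set Bu := D / α with hBu
  let Bb : (ℓ : Fin (M + 1)) → ℝ := fun ℓ => Bu + R + Nd ℓ.1 * (Bw * Bv)
  let hi : Pt M N Nd := (fun _ _ _ => Bw, fun ℓ _ => Bb ℓ, fun _ _ _ => Bv, fun _ _ _ => Bu)
  refine ⟨Set.Icc (-hi) hi, isCompact_Icc, fun z hx hc hO hR => ?_⟩
  obtain ⟨h0, h1, h2, h3⟩ := Opp_terms (lw := lw) (lv := lv) hβ hlw hlv y hc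
  have hC : 0 ≤ C := h0.trans hO
  have hBv0 : 0 ≤ Bv := by positivity
  have hW : ∀ ℓ i j, |z.1 ℓ i j| ≤ Bw := abs_W_le hlw (h1.trans hO)
  have hv : ∀ n ℓ i, |z.2.2.1 n ℓ i| ≤ Bv := by
    intro n ℓ
    refine Fin.cases ?_ (fun ℓ i => ?_) ℓ
    · intro i
      have e : z.2.2.1 n 0 = x n := hx n
      rw [e]
      have : |x n i| ≤ ‖x‖ := (norm_le_pi_norm (x n) i).trans (norm_le_pi_norm x n)
      exact this.trans (le_add_of_nonneg_right (Real.sqrt_nonneg _))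
    · exact (abs_v_le hlv (h2.trans hO) n ℓ i).trans (le_add_of_nonneg_left (norm_nonneg _))
  have hD0 : 0 ≤ D := by positivity
  have hDBu : D ≤ Bu := by
    rw [hBu, le_div_iff₀ hα0]; nlinarith
  have hu : ∀ n ℓ i, |z.2.2.2 n ℓ i| ≤ Bu := by
    intro n ℓ i
    have hvi := abs_le.mp (hv n ℓ.succ i)
    have hpen : z.2.2.1 n ℓ.succ i - lrelu α (z.2.2.2 n ℓ i) ≤ C / β := by
      rw [le_div_iff₀' hβ]
      refine le_trans ?_ (h3.trans hO)
      gcongr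
      exact single_le_triple_sum (fun n ℓ i => z.2.2.1 n ℓ.succ i - lrelu α (z.2.2.2 n ℓ i))
        (lrelu_le_of_inCone hc) n ℓ i
    have hup := (hc n ℓ i).1
    have hCβ : 0 ≤ C / β := by positivity
    have hαBu : α * Bu = D := by rw [hBu]; field_simp
    refine abs_le.mpr ⟨?_, by linarith [hvi.2]⟩
    -- The penalty keeps `σ(u)` above `-D`; on either branch of `σ` this gives `u ≥ -D / α`.
    have hlow : -D ≤ lrelu α (z.2.2.2 n ℓ i) := by linarith [hvi.1]
    rcases le_max_iff.mp hlow with h | h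
    · linarith
    · by_contra! hlt
      nlinarith
  have hb : ∀ ℓ i, |z.2.1 ℓ i| ≤ Bb ℓ := by
    intro ℓ i
    let n : Fin N := ⟨0, hN⟩
    have e : z.2.1 ℓ i = z.2.2.2 n ℓ i - resid z n ℓ i
        - ∑ j : Fin (Nd ℓ.1), z.1 ℓ i j * z.2.2.1 n ℓ.castSucc j := by
      unfold resid; ring
    have hs : |∑ j : Fin (Nd ℓ.1), z.1 ℓ i j * z.2.2.1 n ℓ.castSucc j|
        ≤ Nd ℓ.1 * (Bw * Bv) := by
      refine (Finset.abs_sum_le_sum_abs _ _).trans ?_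
      refine (Finset.sum_le_card_nsmul _ _ (Bw * Bv) fun j _ => ?_).trans_eq ?_
      · rw [abs_mul]
        exact mul_le_mul (hW _ _ _) (hv n ℓ.castSucc j) (abs_nonneg _)
          ((abs_nonneg _).trans (hW ℓ i j))
      · simp
    have hr := (abs_resid_le z n ℓ i).trans hR
    rw [e]
    refine (abs_sub _ _).trans (add_le_add ((abs_sub _ _).trans ?_) hs)
    exact add_le_add (hu n ℓ i) hr
  refine ⟨⟨fun ℓ i j => ?_, fun ℓ i => ?_, fun n ℓ i => ?_, fun n ℓ i => ?_⟩,
    ⟨fun ℓ i j => ?_, fun ℓ i => ?_, fun n ℓ i => ?_, fun n ℓ i => ?_⟩⟩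
  · exact (abs_le.mp (hW ℓ i j)).1
  · exact (abs_le.mp (hb ℓ i)).1
  · exact (abs_le.mp (hv n ℓ i)).1
  · exact (abs_le.mp (hu n ℓ i)).1
  · exact (abs_le.mp (hW ℓ i j)).2
  · exact (abs_le.mp (hb ℓ i)).2
  · exact (abs_le.mp (hv n ℓ i)).2
  · exact (abs_le.mp (hu n ℓ i)).2

/-! ### Finitely many penalty increases -/

/-- If each term is at most `η < 1` times one of its `γ` predecessors, the sequence decays
geometrically, with ratio `η^{1/γ}`. -/
lemma window_decay_s16 (r : ℕ → ℝ) (hr : ∀ k, 0 ≤ r k) {η : ℝ} (hη0 : 0 < η) (hη1 : η < 1)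
    {γ : ℕ} (hγ : 1 ≤ γ) (K : ℕ)
    (h : ∀ k, K ≤ k → γ ≤ k → ∃ t, k - γ ≤ t ∧ t < k ∧ r k ≤ η * r t) :
    ∃ C q : ℝ, 0 < q ∧ q < 1 ∧ ∀ k, r k ≤ C * q ^ k := by
  set q : ℝ := η ^ (1 / (γ : ℝ)) with hq
  have hγ0 : (0 : ℝ) < γ := by exact_mod_cast hγ
  have hq0 : 0 < q := Real.rpow_pos_of_pos hη0 _
  have hq1 : q < 1 := Real.rpow_lt_one hη0.le hη1 (by positivity)
  have hqγ : q ^ γ = η := by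
    rw [hq, ← Real.rpow_natCast, ← Real.rpow_mul hη0.le, one_div_mul_cancel hγ0.ne',
      Real.rpow_one]
  set C : ℝ := ∑ t ∈ Finset.range (K + γ), r t / q ^ t with hC
  have hterm : ∀ t, 0 ≤ r t / q ^ t := fun t => div_nonneg (hr t) (by positivity)
  have hC0 : 0 ≤ C := Finset.sum_nonneg fun t _ => hterm t
  refine ⟨C, q, hq0, hq1, fun k => ?_⟩
  induction k using Nat.strong_induction_on with
  | _ k ih =>
    by_cases hk : k < K + γ
    · rw [← div_le_iff₀ (by positivity)]
      exact Finset.single_le_sum (f := fun t => r t / q ^ t) (fun t _ => hterm t)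
        (Finset.mem_range.mpr hk)
    · obtain ⟨t, ht1, ht2, ht3⟩ := h k (by omega) (by omega)
      calc r k ≤ η * r t := ht3
        _ ≤ η * (C * q ^ t) := by gcongr; exact ih t ht2
        _ ≤ η * (C * q ^ (k - γ)) := by
            gcongr η * (C * ?_)
            exact pow_le_pow_of_le_one hq0.le hq1.le ht1
        _ = C * q ^ k := by
            rw [← hqγ]
            conv_rhs => rw [show k = γ + (k - γ) by omega, pow_add]
            ring

/-- The two ingredients of the conclusion: a vanishing residual and a bounded objective along a
subsequence of indices `≥ 1`. -/
def GoodSubseq (α β lw lv : ℝ) (y : Fin N → Fin (Nd (M + 1)) → ℝ) (z : ℕ → Pt M N Nd) : Prop :=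
  ∃ (ψ : ℕ → ℕ) (C : ℝ), StrictMono ψ ∧ (∀ j, 1 ≤ ψ j) ∧
    (∀ j, Opp α β lw lv y (z (ψ j)) ≤ C) ∧ Tendsto (fun j => residNorm (z (ψ j))) atTop (𝓝 0)

/-- Constant penalty from some point on: the residuals satisfy the window contraction, so they are
summable and the multipliers converge. -/
lemma exists_subseq_of_eventually {α β lw lv θ η : ℝ} (y : Fin N → Fin (Nd (M + 1)) → ℝ)
    (z : ℕ → Pt M N Nd) (ξ : ℕ → Us M N Nd) (ρ : ℕ → ℝ) (hρ : ∀ k, 0 < ρ k)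
    (hη0 : 0 < η) (hη1 : η < 1) {γ : ℕ} (hγ : 1 ≤ γ)
    (hkey : ∀ k, Opp α β lw lv y (z (k + 1)) + sumSq (ξ (k + 1)) / (2 * ρ k)
      < θ + sumSq (ξ k) / (2 * ρ k))
    (hxi : ∀ k n ℓ i, ξ (k + 1) n ℓ i = ξ k n ℓ i + ρ k * resid (z (k + 1)) n ℓ i)
    (K : ℕ) (hconst : ∀ k, K ≤ k → ρ k = ρ K)
    (hwin : ∀ k, K ≤ k → γ ≤ k →
      ∃ t, k - γ ≤ t ∧ t < k ∧ residNorm (z k) ≤ η * residNorm (z t)) :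
    GoodSubseq α β lw lv y z := by
  obtain ⟨C, q, hq0, hq1, hdec⟩ :=
    window_decay_s16 (fun k => residNorm (z k)) (fun k => residNorm_nonneg _) hη0 hη1 hγ K hwin
  have hr0 : Tendsto (fun k => residNorm (z k)) atTop (𝓝 0) := by
    refine squeeze_zero (fun k => residNorm_nonneg _) hdec ?_
    simpa using (tendsto_pow_atTop_nhds_zero_of_lt_one hq0.le hq1).const_mul C
  have hconv : ∀ n ℓ i, ∃ l, Tendsto (fun k => ξ (k + K) n ℓ i) atTop (𝓝 l) := by
    intro n ℓ i
    apply cauchySeq_tendsto_of_complete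
    refine cauchySeq_of_le_geometric q (ρ K * C * q ^ (K + 1)) hq1 fun k => ?_
    rw [show k + 1 + K = (k + K) + 1 by ring, hxi, hconst (k + K) (by omega), Real.dist_eq,
      sub_add_cancel_left, abs_neg, abs_mul, abs_of_pos (hρ K)]
    calc ρ K * |resid (z (k + K + 1)) n ℓ i| ≤ ρ K * (C * q ^ (k + K + 1)) := by
          have := hρ K
          gcongr
          exact (abs_resid_le _ n ℓ i).trans (hdec _)
      _ = _ := by ring
  choose l hl using hconv
  have hlim : Tendsto (fun k => sumSq (ξ (k + K))) atTop (𝓝 (sumSq l)) := by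
    unfold sumSq
    exact tendsto_finsetSum _ fun n _ => tendsto_finsetSum _ fun ℓ _ =>
      tendsto_finsetSum _ fun i _ => (hl n ℓ i).pow 2
  obtain ⟨B, hB⟩ := hlim.bddAbove_range
  refine ⟨fun j => j + K + 1, θ + B / (2 * ρ K), ?_, fun j => Nat.le_add_left _ _, fun j => ?_, ?_⟩
  · intro a b hab
    show a + K + 1 < b + K + 1
    omega
  · have hk := hkey (j + K)
    rw [hconst (j + K) (by omega)] at hk
    have h1 : sumSq (ξ (j + K)) ≤ B := hB ⟨j, rfl⟩
    have h2 : 0 ≤ sumSq (ξ (j + K + 1)) / (2 * ρ K) :=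
      div_nonneg (sumSq_nonneg _) (by linarith [hρ K])
    have h3 : sumSq (ξ (j + K)) / (2 * ρ K) ≤ B / (2 * ρ K) := by
      have := hρ K
      gcongr
    linarith
  · exact hr0.comp (tendsto_add_atTop_nat (K + 1))

/-! ### Infinitely many penalty increases -/

/-- A monotone positive sequence that grows by a fixed factor `η⁻¹ > 1` infinitely often diverges:
a finite limit would make the increments vanish. -/
lemma tendsto_atTop_of_frequently_jump (ρ : ℕ → ℝ) (hρ : ∀ k, 0 < ρ k) (hmono : Monotone ρ)
    {η : ℝ} (hη0 : 0 < η) (hη1 : η < 1) (h : ∃ᶠ k in atTop, ρ k / η ≤ ρ (k + 1)) :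
    Tendsto ρ atTop atTop := by
  rcases tendsto_atTop_of_monotone hmono with h1 | ⟨l, hl⟩
  · exact h1
  · exfalso
    have hd : Tendsto (fun k => ρ (k + 1) - ρ k) atTop (𝓝 0) := by
      simpa using (hl.comp (tendsto_add_atTop_nat 1)).sub hl
    have hc : 0 < ρ 0 * (1 / η - 1) :=
      mul_pos (hρ 0) (sub_pos.mpr (one_lt_one_div hη0 hη1))
    obtain ⟨k, hk1, hk2⟩ := (h.and_eventually (hd.eventually (gt_mem_nhds hc))).exists
    have h0 : ρ 0 ≤ ρ k := hmono (Nat.zero_le k)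
    have h1 : ρ 0 * (1 / η - 1) ≤ ρ k * (1 / η - 1) :=
      mul_le_mul_of_nonneg_right h0 (sub_pos.mpr (one_lt_one_div hη0 hη1)).le
    have h2 : ρ k * (1 / η - 1) = ρ k / η - ρ k := by ring
    linarith

/-- A penalty dominating `‖ξ‖^{1+η₃}` with `η₃ > 1` also dominates `‖ξ‖²`, up to the constant that
covers `‖ξ‖ ≤ 1`. -/
lemma sumSq_le_of_rpow_le {η3 ρ : ℝ} (hη3 : 1 < η3) (hρ : 0 < ρ) (ξ : Us M N Nd)
    (h : multNorm ξ ^ ((1 : ℝ) + η3) ≤ ρ) : sumSq ξ ≤ 1 + ρ := by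
  rw [← multNorm_sq]
  have h0 : 0 ≤ multNorm ξ := Real.sqrt_nonneg _
  rcases le_total (multNorm ξ) 1 with h1 | h1
  · nlinarith
  · have : multNorm ξ ^ (2 : ℝ) ≤ multNorm ξ ^ ((1 : ℝ) + η3) :=
      Real.rpow_le_rpow_of_exponent_le h1 (by linarith)
    rw [Real.rpow_two] at this
    linarith

/-- Penalty increased infinitely often: the good indices are the successors of the increases. -/
lemma exists_subseq_of_frequently {α β lw lv θ η2 η3 : ℝ} (y : Fin N → Fin (Nd (M + 1)) → ℝ)
    (z : ℕ → Pt M N Nd) (ξ : ℕ → Us M N Nd) (ρ : ℕ → ℝ) (hρ : ∀ k, 0 < ρ k) (hmono : Monotone ρ)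
    (hη2 : 0 < η2) (hη2' : η2 < 1) (hη3 : 1 < η3)
    (hO : ∀ k, 0 ≤ Opp α β lw lv y (z (k + 1)))
    (hkey : ∀ k, Opp α β lw lv y (z (k + 1)) + sumSq (ξ (k + 1)) / (2 * ρ k)
      < θ + sumSq (ξ k) / (2 * ρ k))
    (hxi : ∀ k n ℓ i, ξ (k + 1) n ℓ i = ξ k n ℓ i + ρ k * resid (z (k + 1)) n ℓ i)
    (hjump : ∃ᶠ k in atTop,
      ρ (k + 1) = max (ρ k / η2) (multNorm (ξ (k + 1)) ^ ((1 : ℝ) + η3))) :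
    GoodSubseq α β lw lv y z := by
  have hρtop : Tendsto ρ atTop atTop :=
    tendsto_atTop_of_frequently_jump ρ hρ hmono hη2 hη2'
      (hjump.mono fun k hk => hk ▸ le_max_left _ _)
  obtain ⟨φ, hφ, hφj⟩ := extraction_of_frequently_atTop hjump
  have hxiφ : ∀ j, sumSq (ξ (φ j + 1)) ≤ 1 + ρ (φ j + 1) := fun j =>
    sumSq_le_of_rpow_le hη3 (hρ _) _ ((le_max_right _ _).trans_eq (hφj j).symm)
  have hφ1 : Tendsto (fun j => φ j + 1) atTop atTop :=
    (tendsto_add_atTop_nat 1).comp hφ.tendsto_atTop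
  refine ⟨fun j => φ j + 1 + 1, θ + (1 / 2) * (1 / ρ 0 + 1), ?_, fun j => Nat.le_add_left _ _,
    fun j => ?_, ?_⟩
  · intro a b hab
    have := hφ hab
    show φ a + 1 + 1 < φ b + 1 + 1
    omega
  · have hk := hkey (φ j + 1)
    have hp := hρ (φ j + 1)
    have hp0 := hρ 0
    have h2 : 0 ≤ sumSq (ξ (φ j + 1 + 1)) / (2 * ρ (φ j + 1)) :=
      div_nonneg (sumSq_nonneg _) (by linarith)
    have h3 : sumSq (ξ (φ j + 1)) / (2 * ρ (φ j + 1)) ≤ (1 / 2) * (1 / ρ 0 + 1) :=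
      calc _ ≤ (1 + ρ (φ j + 1)) / (2 * ρ (φ j + 1)) := by gcongr; exact hxiφ j
        _ = (1 / 2) * (1 / ρ (φ j + 1) + 1) := by field_simp
        _ ≤ _ := by gcongr; exact hmono (Nat.zero_le _)
    linarith
  · -- `ρ² ‖r‖² ≤ 4ρθ + 4(1 + ρ)`, and the right side is `o(ρ²)`.
    have hbound : ∀ j, residNorm (z (φ j + 1 + 1)) ^ 2
        ≤ (4 * θ + 4) * (ρ (φ j + 1))⁻¹ + 4 * ((ρ (φ j + 1))⁻¹) ^ 2 := by
      intro j
      have hp := hρ (φ j + 1)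
      have hk := hkey (φ j + 1)
      have h1 : sumSq (ξ (φ j + 1 + 1)) / (2 * ρ (φ j + 1))
          ≤ (2 * ρ (φ j + 1) * θ + sumSq (ξ (φ j + 1))) / (2 * ρ (φ j + 1)) := by
        have e : (2 * ρ (φ j + 1) * θ + sumSq (ξ (φ j + 1))) / (2 * ρ (φ j + 1))
          = θ + sumSq (ξ (φ j + 1)) / (2 * ρ (φ j + 1)) := by field_simp
        rw [e]; linarith [hO (φ j + 1)]
      rw [div_le_div_iff_of_pos_right (by linarith)] at h1
      have h2 := resid_le_of_update (ξ (φ j + 1)) (ξ (φ j + 1 + 1)) (z (φ j + 1 + 1))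
        (hxi (φ j + 1))
      have h3 := hxiφ j
      have e : (4 * θ + 4) * (ρ (φ j + 1))⁻¹ + 4 * ((ρ (φ j + 1))⁻¹) ^ 2
          = ((4 * θ + 4) * ρ (φ j + 1) + 4) / ρ (φ j + 1) ^ 2 := by field_simp
      rw [e, le_div_iff₀ (by positivity)]
      linarith
    have hinv : Tendsto (fun j => (ρ (φ j + 1))⁻¹) atTop (𝓝 0) :=
      tendsto_inv_atTop_zero.comp (hρtop.comp hφ1)
    have hlim : Tendsto (fun j => residNorm (z (φ j + 1 + 1)) ^ 2) atTop (𝓝 0) := by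
      refine squeeze_zero (fun j => sq_nonneg _) hbound ?_
      simpa using (hinv.const_mul (4 * θ + 4)).add ((hinv.pow 2).const_mul 4)
    have := hlim.sqrt
    simpa [Real.sqrt_sq (residNorm_nonneg _)] using this

/-! ### The two cases combined -/

/-- the inexact augmented Lagrangian scheme drives the
feasibility residual to zero along a subsequence, and the iterates have an
accumulation point. -/
theorem ialm_feasibility
    (M N : ℕ) (Nd : ℕ → ℕ) (hN : 1 ≤ N) (hNd : ∀ ℓ ≤ M + 1, 1 ≤ Nd ℓ)
    (α β lw lv θ : ℝ) (hα0 : 0 < α) (hα1 : α < 1) (hβ : 0 < β)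
    (hlw : 0 < lw) (hlv : 0 < lv)
    (x : Fin N → Fin (Nd 0) → ℝ) (y : Fin N → Fin (Nd (M + 1)) → ℝ)
    (hθ : (1 / (N : ℝ)) * ∑ n : Fin N, ∑ i : Fin (Nd (M + 1)), (y n i) ^ 2 < θ)
    (η1 η2 η3 : ℝ) (hη1 : 0 < η1) (hη1' : η1 < 1) (hη2 : 0 < η2) (hη2' : η2 < 1)
    (hη3 : 1 < η3) (γ : ℕ) (hγ : 1 ≤ γ)
    (zseq : ℕ → Pt M N Nd) (ξseq : ℕ → Us M N Nd) (ρseq : ℕ → ℝ)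
    (hρ0 : 0 < ρseq 0)
    (hfeas : ∀ k, 1 ≤ k → inputEq x (zseq k) ∧ inCone α (zseq k))
    (hAL : ∀ k, 1 ≤ k →
      ALag α β lw lv y (ρseq (k - 1)) (ξseq (k - 1)) (zseq k) < θ)
    (hxi : ∀ k, 1 ≤ k → ∀ (n : Fin N) (ℓ : Fin (M + 1)) (i : Fin (Nd (ℓ.1 + 1))),
      ξseq k n ℓ i = ξseq (k - 1) n ℓ i + ρseq (k - 1) * resid (zseq k) n ℓ i)
    (hρupd : ∀ k, 1 ≤ k →
      ((k ≤ γ ∨ residNorm (zseq k) ≤ η1 *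
          (Finset.Icc (k - γ) (k - 1)).sup' (Finset.nonempty_Icc.mpr (by omega))
            (fun t => residNorm (zseq t))) →
        ρseq k = ρseq (k - 1)) ∧
      (¬(k ≤ γ ∨ residNorm (zseq k) ≤ η1 *
          (Finset.Icc (k - γ) (k - 1)).sup' (Finset.nonempty_Icc.mpr (by omega))
            (fun t => residNorm (zseq t))) →
        ρseq k = max (ρseq (k - 1) / η2) (multNorm (ξseq k) ^ ((1 : ℝ) + η3)))) :
    Filter.liminf (fun k => residNorm (zseq k)) atTop = 0 ∧
    ∃ (zstar : Pt M N Nd) (φ : ℕ → ℕ), StrictMono φ ∧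
      Tendsto (fun j => zseq (φ j)) atTop (𝓝 zstar) := by
  have hstep : ∀ k, ρseq (k + 1) = ρseq k ∨
      ρseq (k + 1) = max (ρseq k / η2) (multNorm (ξseq (k + 1)) ^ ((1 : ℝ) + η3)) := by
    intro k
    have h := hρupd (k + 1) (by omega)
    exact (em _).imp h.1 h.2
  have hρ : ∀ k, 0 < ρseq k := by
    intro k
    induction k with
    | zero => exact hρ0
    | succ k ih =>
      rcases hstep k with h | h <;> rw [h]
      · exact ih
      · exact lt_max_of_lt_left (div_pos ih hη2)
  have hmono : Monotone ρseq := by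
    refine monotone_nat_of_le_succ fun k => ?_
    rcases hstep k with h | h <;> rw [h]
    exact le_max_of_le_left (by rw [le_div_iff₀ hη2]; nlinarith [hρ k])
  have hxi' : ∀ k n ℓ i,
      ξseq (k + 1) n ℓ i = ξseq k n ℓ i + ρseq k * resid (zseq (k + 1)) n ℓ i :=
    fun k => hxi (k + 1) (by omega)
  have hkey : ∀ k, Opp α β lw lv y (zseq (k + 1)) + sumSq (ξseq (k + 1)) / (2 * ρseq k)
      < θ + sumSq (ξseq k) / (2 * ρseq k) := by
    intro k
    have h := hAL (k + 1) (by omega)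
    rw [Nat.add_sub_cancel, ALag_eq α β lw lv y (hρ k) _ _ _ (hxi' k), sub_div] at h
    linarith
  have hO : ∀ k, 0 ≤ Opp α β lw lv y (zseq (k + 1)) := fun k =>
    (Opp_terms hβ hlw hlv y (hfeas (k + 1) (by omega)).2).1
  have hgood : GoodSubseq α β lw lv y zseq := by
    by_cases hjump : ∃ᶠ k in atTop,
        ρseq (k + 1) = max (ρseq k / η2) (multNorm (ξseq (k + 1)) ^ ((1 : ℝ) + η3))
    · exact exists_subseq_of_frequently y zseq ξseq ρseq hρ hmono hη2 hη2' hη3 hO hkey hxi' hjump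
    · obtain ⟨K, hK⟩ := eventually_atTop.mp (not_frequently.mp hjump)
      refine exists_subseq_of_eventually y zseq ξseq ρseq hρ hη1 hη1' hγ hkey hxi'
        (K + γ + 1) (fun k hk => ?_) fun k hk _ => ?_
      · induction k, hk using Nat.le_induction with
        | base => rfl
        | succ k hk ih => exact ((hstep k).resolve_right (hK k (by omega))).trans ih
      · have hcond := (hρupd k (by omega)).2
        by_contra! hno
        have hk1 := hK (k - 1) (by omega)
        rw [Nat.sub_add_cancel (by omega)] at hk1
        refine hk1 (hcond ?_)
        rintro (hle | hle)
        · omega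
        · obtain ⟨t, ht, hteq⟩ := Finset.exists_mem_eq_sup' (s := Finset.Icc (k - γ) (k - 1))
            (Finset.nonempty_Icc.mpr (by omega)) (fun t => residNorm (zseq t))
          rw [hteq] at hle
          rw [Finset.mem_Icc] at ht
          exact absurd hle (not_le.mpr (hno t ht.1 (by omega)))
  obtain ⟨ψ, C, hψ, hψ1, hψO, hψr⟩ := hgood
  constructor
  · have hfreq : ∀ ε > 0, ∃ᶠ k in atTop, residNorm (zseq k) ≤ ε := fun ε hε =>
      hψ.tendsto_atTop.frequently (hψr.eventually (ge_mem_nhds hε)).frequently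
    apply le_antisymm
    · refine le_of_forall_pos_le_add fun ε hε => ?_
      rw [zero_add]
      exact liminf_le_of_frequently_le (hfreq ε hε)
        (isBoundedUnder_of ⟨0, fun k => residNorm_nonneg _⟩)
    · exact le_liminf_of_le (IsCoboundedUnder.of_frequently_le (hfreq 1 one_pos))
        (Eventually.of_forall fun k => residNorm_nonneg _)
  · obtain ⟨R, hR⟩ := hψr.bddAbove_range
    obtain ⟨S, hS, hmem⟩ := exists_compact_box (M := M) (Nd := Nd) hN hα0 hα1 hβ hlw hlv x y C R
    obtain ⟨zstar, -, φ, hφ, hlim⟩ := hS.tendsto_subseq (x := fun j => zseq (ψ j)) fun j =>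
      hmem _ (hfeas _ (hψ1 j)).1 (hfeas _ (hψ1 j)).2 (hψO j) (hR ⟨j, rfl⟩)
    exact ⟨zstar, ψ ∘ φ, hψ.comp hφ, hlim⟩
end
end

section
/- (A Clarke stationary point that is not a local minimizer for a two-layer leaky ReLU network.) Let 0 < α < 1, σ(t) = max(t, αt), and define f : ℝ⁴ → ℝ by f(w₁,w₂,b₁,b₂) = ((w₂ σ(w₁+b₁) + b₂) + 1)² + ((w₂ σ(2w₁+b₁) + b₂) − 1)². Then: (i) f(1,2,−1,−1) = 0, and since f ≥ 0 everywhere, (1,2,−1,−1) is a global minimizer of f; (ii) f(0,1,0,0) = 2, and for every 0 < ε < 2/5 one has f(ε,1,0,0) = 5ε² − 2ε + 2 < 2; consequently (0,1,0,0) is not a local minimizer of f. -/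
/-!
The loss `exf` is a sum of two squares, so its zero at `(1, 2, -1, -1)` is a global minimum.
Along the ray `ε ↦ (ε, 1, 0, 0)`, `ε ≥ 0`, the leaky ReLU acts as the identity and the loss is
`(ε + 1) ^ 2 + (2 * ε - 1) ^ 2 = 2 - ε * (2 - 5 * ε)`, which drops below its value `2` at `ε = 0`
as soon as `0 < ε < 2 / 5`. Such points exist in every neighbourhood of `(0, 1, 0, 0)`.
-/

noncomputable section

/-- The objective of Example 3.1: a two-neuron leaky ReLU fitting problem. -/
def exf (α : ℝ) (p : ℝ × ℝ × ℝ × ℝ) : ℝ :=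
  ((p.2.1 * max (p.1 + p.2.2.1) (α * (p.1 + p.2.2.1)) + p.2.2.2) + 1) ^ 2 +
    ((p.2.1 * max (2 * p.1 + p.2.2.1) (α * (2 * p.1 + p.2.2.1)) + p.2.2.2) - 1) ^ 2

/-- `(1,2,-1,-1)` is a global minimizer of `f`, while `(0,1,0,0)`
has value `2`, `f(ε,1,0,0) = 5ε² - 2ε + 2 < 2` for `0 < ε < 2/5`, and hence
`(0,1,0,0)` is not a local minimizer of `f`. -/
theorem clarke_point_not_local_min (α : ℝ) (hα0 : 0 < α) (hα1 : α < 1) :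
    exf α (1, 2, -1, -1) = 0 ∧
    (∀ p : ℝ × ℝ × ℝ × ℝ, exf α (1, 2, -1, -1) ≤ exf α p) ∧
    exf α (0, 1, 0, 0) = 2 ∧
    (∀ ε : ℝ, 0 < ε → ε < 2 / 5 →
      exf α (ε, 1, 0, 0) = 5 * ε ^ 2 - 2 * ε + 2 ∧ exf α (ε, 1, 0, 0) < 2) ∧
    ¬ IsLocalMin (exf α) (0, 1, 0, 0) := by
  -- both points of the data set are fitted exactly at `(1, 2, -1, -1)`
  have h0 : exf α (1, 2, -1, -1) = 0 := by
    have h1 : max (1 : ℝ) α = 1 := max_eq_left hα1.le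
    norm_num [exf, h1]
  have h2 : exf α (0, 1, 0, 0) = 2 := by norm_num [exf]
  have hε : ∀ ε : ℝ, 0 < ε → ε < 2 / 5 →
      exf α (ε, 1, 0, 0) = 5 * ε ^ 2 - 2 * ε + 2 ∧ exf α (ε, 1, 0, 0) < 2 := by
    intro ε h h'
    -- for `ε > 0` both preactivations are positive, so the activation is the identity there
    have m1 : max ε (α * ε) = ε := max_eq_left (by nlinarith)
    have m2 : max (2 * ε) (α * (2 * ε)) = 2 * ε := max_eq_left (by nlinarith)
    have e : exf α (ε, 1, 0, 0) = 5 * ε ^ 2 - 2 * ε + 2 := by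
      simp only [exf, add_zero, m1, m2]
      ring
    exact ⟨e, by rw [e]; nlinarith⟩
  refine ⟨h0, fun p => ?_, h2, hε, fun hmin => ?_⟩
  · rw [h0]
    unfold exf
    positivity
  · -- pull local minimality back along the path `ε ↦ (ε, 1, 0, 0)` and take a small `ε > 0`
    have hc : Continuous fun ε : ℝ => ((ε, 1, 0, 0) : ℝ × ℝ × ℝ × ℝ) := by fun_prop
    have hev : ∀ᶠ ε in nhds (0 : ℝ), exf α (0, 1, 0, 0) ≤ exf α (ε, 1, 0, 0) :=
      (hc.tendsto 0).eventually hmin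
    have hIoo : ∀ᶠ ε in nhdsWithin (0 : ℝ) (Set.Ioi 0), ε ∈ Set.Ioo (0 : ℝ) (2 / 5) :=
      Ioo_mem_nhdsGT (by norm_num)
    obtain ⟨ε, hle, hpos, hlt⟩ :=
      ((hev.filter_mono nhdsWithin_le_nhds).and hIoo).exists
    have := (hε ε hpos hlt).2
    linarith
end
end
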